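/- arXiv:2403.16098 — 2 statements merged into one kernel-verified Lean document; each statement's English description precedes it below -/
import Mathlib

section
/- Let G be the complete bipartite graph on the vertex set Fin n ⊕ Fin m (left vertices form one part, right vertices the other, and two vertices are adjacent exactly when they lie in different parts). (1) For q ≥ 1 with q ≤ n and q ≤ m, a finite set S of vertices is the vertex set of some path in G with 2q vertices (a walk visiting 2q pairwise distinct vertices) if and only if S contains exactly q left vertices and exactly q right vertices. (2) For q ≥ 1, a finite set S of vertices is the vertex set of some path in G with 2q+1 vertices if and only if (|S ∩ left|, |S ∩ right|) equals (q, q+1) or (q+1, q) (with the corresponding bounds q+1 ≤ n, q ≤ m, resp. q ≤ n, q+1 ≤ m). Consequently, the path ideal I_t(G) equals I_q J_q when t = 2q and I_q J_{q+1} + I_{q+1} J_q when t = 2q+1. -/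
open MvPolynomial

/-- `PathMonomials G t` is the set of products of the vertex variables along the paths of
`G` with `t` (pairwise distinct) vertices; it generates the path ideal `I_t(G)`. -/
def PathMonomials {V : Type*} [DecidableEq V] {K : Type*} [Field K]
    (G : SimpleGraph V) (t : ℕ) : Set (MvPolynomial V K) :=
  {f | ∃ l : List V, l.Nodup ∧ l.length = t ∧ l.Chain' G.Adj ∧ f = (l.map X).prod}

/-- The generating monomials of the product `I_c J_d` of squarefree Veronese ideals:
products of a squarefree monomial of degree `c` in the `x`-variables and one of degree
`d` in the `y`-variables. -/
def MixedMonomials (n m : ℕ) (K : Type*) [Field K] (c d : ℕ) :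
    Set (MvPolynomial (Fin n ⊕ Fin m) K) :=
  {f | ∃ sx : Finset (Fin n), ∃ sy : Finset (Fin m), sx.card = c ∧ sy.card = d ∧
    f = (∏ i ∈ sx, X (Sum.inl i)) * ∏ j ∈ sy, X (Sum.inr j)}

/-!
A path of a graph with a proper two-colouring alternates between the colours, so the numbers of its
vertices of the two colours differ by at most one. Conversely, if all edges between two finite sets
are present and the cardinalities of these sets differ by at most one, listing the elements
alternately, starting in the larger set, gives a path through all of them. Ideals of squarefree
monomials are determined by the family of supports of their generators, and the product of two such
ideals with generators in disjoint sets of variables corresponds to taking unions of supports; this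
turns the description of the vertex sets of paths into that of the path ideals.
-/

open scoped Finset

section Interleave

variable {V : Type*}

/-- The list which takes its entries alternately from two lists, beginning with the first one, and
ends with what remains of one list once the other is exhausted; it turns enumerations of the two
sides of a bipartite graph into a path. -/
def interleave : List V → List V → List V
  | [], ys => ys
  | x :: xs, ys => x :: interleave ys xs
termination_by xs ys => xs.length + ys.length

theorem interleave_perm_append (xs ys : List V) : (interleave xs ys).Perm (xs ++ ys) := by
  fun_induction interleave xs ys with
  | case1 ys => exact .refl ys
  | case2 x xs ys ih => exact (ih.trans List.perm_append_comm).cons x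

theorem mem_of_mem_head?_interleave {xs ys : List V} (h : ys.length ≤ xs.length) {v : V}
    (hv : v ∈ (interleave xs ys).head?) : v ∈ xs := by
  cases xs with
  | nil => simp_all [interleave]
  | cons x xs => simp_all [interleave]

theorem isChain_interleave {R : V → V → Prop} {xs ys : List V}
    (hxy : ∀ x ∈ xs, ∀ y ∈ ys, R x y) (hyx : ∀ y ∈ ys, ∀ x ∈ xs, R y x)
    (hle : ys.length ≤ xs.length) (hle' : xs.length ≤ ys.length + 1) :
    (interleave xs ys).IsChain R := by
  fun_induction interleave xs ys with
  | case1 ys => simp_all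
  | case2 x xs ys ih =>
    have hlen : xs.length ≤ ys.length := by simpa using hle'
    refine List.isChain_cons.2 ⟨fun v hv => ?_, ?_⟩
    · exact hxy x List.mem_cons_self v (mem_of_mem_head?_interleave hlen hv)
    · exact ih (fun y hy z hz => hyx y hy z (List.mem_cons_of_mem x hz))
        (fun z hz => hxy z (List.mem_cons_of_mem x hz)) hlen hle

end Interleave

section PathVertexSets

variable {V : Type*} [DecidableEq V] {G : SimpleGraph V}

/-- The vertex sets of the paths of `G` with `t` vertices: the supports of the generators of the
path ideal `I_t(G)`. Paths are encoded as duplicate-free lists. -/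
def pathVertexSets (G : SimpleGraph V) (t : ℕ) : Set (Finset V) :=
  {S | ∃ l : List V, l.Nodup ∧ l.length = t ∧ l.IsChain G.Adj ∧ l.toFinset = S}

theorem card_of_mem_pathVertexSets {t : ℕ} {S : Finset V} (hS : S ∈ pathVertexSets G t) :
    #S = t := by
  obtain ⟨l, hnodup, rfl, -, rfl⟩ := hS
  exact List.toFinset_card_of_nodup hnodup

theorem card_filter_coloring_not_le_of_mem_pathVertexSets (C : G.Coloring Bool) {t : ℕ}
    {S : Finset V} (hS : S ∈ pathVertexSets G t) (b : Bool) :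
    #{v ∈ S | C v = !b} ≤ #{v ∈ S | C v = b} + 1 := by
  obtain ⟨l, hnodup, -, hchain, rfl⟩ := hS
  have card_filter (c : Bool) : #{v ∈ l.toFinset | C v = c} = (l.map C).count c := by
    rw [List.count, List.countP_map, List.countP_eq_length_filter,
      ← List.toFinset_card_of_nodup (hnodup.filter _), List.toFinset_filter]
    simp only [Function.comp_apply, beq_iff_eq]
  have alternates : (l.map C).IsChain (· ≠ ·) :=
    (List.isChain_map C).2 (hchain.imp fun _ _ => C.valid)
  rw [card_filter, card_filter]
  exact alternates.count_not_le_count_add_one b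

theorem union_mem_pathVertexSets {S T : Finset V} (hG : G.IsCompleteBetween S T)
    (hTS : #T ≤ #S) (hST : #S ≤ #T + 1) : S ∪ T ∈ pathVertexSets G (#S + #T) := by
  have hperm := interleave_perm_append S.toList T.toList
  refine ⟨interleave S.toList T.toList, hperm.nodup_iff.2 ?_, ?_, ?_, ?_⟩
  · refine S.nodup_toList.append T.nodup_toList (List.disjoint_left.2 fun v hvS hvT => ?_)
    exact Set.disjoint_left.1 hG.disjoint (Finset.mem_toList.1 hvS) (Finset.mem_toList.1 hvT)
  · simp [hperm.length_eq]
  · refine isChain_interleave ?_ ?_ (by simpa using hTS) (by simpa using hST)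
    · exact fun v hv w hw => hG (Finset.mem_toList.1 hv) (Finset.mem_toList.1 hw)
    · exact fun w hw v hv => (hG (Finset.mem_toList.1 hv) (Finset.mem_toList.1 hw)).symm
  · rw [List.toFinset_eq_of_perm _ _ hperm, List.toFinset_append, Finset.toList_toFinset,
      Finset.toList_toFinset]

end PathVertexSets

section Bidegree

variable {α β : Type*}

/-- The finite sets with `c` elements on the left and `d` on the right: the supports of the
squarefree monomials of bidegree `(c, d)` in two groups of variables. -/
def finsetsOfBidegree (c d : ℕ) : Set (Finset (α ⊕ β)) :=
  {S | #S.toLeft = c ∧ #S.toRight = d}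

theorem card_filter_isLeft (S : Finset (α ⊕ β)) :
    #{v ∈ S | v.isLeft = true} = #S.toLeft := by
  rw [← Finset.card_map (Function.Embedding.inl : α ↪ α ⊕ β)]
  congr 1
  ext (a | b) <;> simp

theorem card_filter_isRight (S : Finset (α ⊕ β)) :
    #{v ∈ S | v.isRight = true} = #S.toRight := by
  rw [← Finset.card_map (Function.Embedding.inr : β ↪ α ⊕ β)]
  congr 1
  ext (a | b) <;> simp

theorem disjoint_of_mem_finsetsOfBidegree {c d : ℕ} {S T : Finset (α ⊕ β)}
    (hS : S ∈ finsetsOfBidegree c 0) (hT : T ∈ finsetsOfBidegree 0 d) : Disjoint S T := by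
  have hSr := Finset.card_eq_zero.1 hS.2
  have hTl := Finset.card_eq_zero.1 hT.1
  refine Finset.disjoint_left.2 ?_
  rintro (a | b) hvS hvT
  · simpa [hTl] using Finset.mem_toLeft.2 hvT
  · simpa [hSr] using Finset.mem_toRight.2 hvS

variable [DecidableEq α] [DecidableEq β]

theorem image2_union_finsetsOfBidegree (c d : ℕ) :
    Set.image2 (· ∪ ·) (finsetsOfBidegree c 0) (finsetsOfBidegree 0 d) =
      (finsetsOfBidegree c d : Set (Finset (α ⊕ β))) := by
  ext S
  constructor
  · rintro ⟨S, ⟨hSl, hSr⟩, T, ⟨hTl, hTr⟩, rfl⟩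
    rw [Finset.card_eq_zero] at hSr hTl
    constructor <;> simp [Finset.toLeft_union, Finset.toRight_union, *]
  · rintro ⟨hl, hr⟩
    refine ⟨S.toLeft.disjSum ∅, ⟨?left, ?right_empty⟩,
      .disjSum ∅ S.toRight, ⟨?left_empty, ?right⟩, ?_⟩
    case left | right => simpa only [Finset.toLeft_disjSum, Finset.toRight_disjSum]
    case left_empty | right_empty =>
      simp only [Finset.toLeft_disjSum, Finset.toRight_disjSum, Finset.card_empty]
    ext (a | b) <;> simp

theorem mem_pathVertexSets_completeBipartiteGraph {t : ℕ} {S : Finset (α ⊕ β)} :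
    S ∈ pathVertexSets (completeBipartiteGraph α β) t ↔
      #S.toLeft + #S.toRight = t ∧ #S.toLeft ≤ #S.toRight + 1 ∧ #S.toRight ≤ #S.toLeft + 1 := by
  constructor
  · intro hS
    let C := SimpleGraph.CompleteBipartiteGraph.bicoloring α β
    have left_eq : {v ∈ S | C v = false} = {v ∈ S | v.isLeft = true} :=
      Finset.filter_congr fun v _ => Sum.isRight_eq_false
    have hlr := card_filter_coloring_not_le_of_mem_pathVertexSets C hS true
    have hrl := card_filter_coloring_not_le_of_mem_pathVertexSets C hS false
    rw [Bool.not_true, left_eq, card_filter_isLeft] at hlr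
    rw [Bool.not_false, left_eq, card_filter_isLeft] at hrl
    rw [Finset.card_toLeft_add_card_toRight, ← card_filter_isRight]
    exact ⟨card_of_mem_pathVertexSets hS, hlr, hrl⟩
  · rintro ⟨rfl, hlr, hrl⟩
    have hG : (completeBipartiteGraph α β).IsCompleteBetween
        ({v ∈ S | v.isLeft = true} : Finset _) ({v ∈ S | v.isRight = true} : Finset _) :=
      fun u hu v hv => .inl ⟨(Finset.mem_filter.1 hu).2, (Finset.mem_filter.1 hv).2⟩
    have hunion : {v ∈ S | v.isLeft = true} ∪ {v ∈ S | v.isRight = true} = S := by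
      ext (a | b) <;> simp
    rw [← card_filter_isLeft, ← card_filter_isRight] at hlr hrl ⊢
    rcases le_total #{v ∈ S | v.isRight = true} #{v ∈ S | v.isLeft = true} with h | h
    · simpa only [hunion] using union_mem_pathVertexSets hG h hlr
    · simpa only [Finset.union_comm, hunion, add_comm] using
        union_mem_pathVertexSets hG.symm h hrl

theorem pathVertexSets_completeBipartiteGraph_two_mul (q : ℕ) :
    pathVertexSets (completeBipartiteGraph α β) (2 * q) = finsetsOfBidegree q q := by
  ext S
  rw [mem_pathVertexSets_completeBipartiteGraph, finsetsOfBidegree, Set.mem_ofPred_eq]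
  omega

theorem pathVertexSets_completeBipartiteGraph_two_mul_add_one (q : ℕ) :
    pathVertexSets (completeBipartiteGraph α β) (2 * q + 1) =
      finsetsOfBidegree q (q + 1) ∪ finsetsOfBidegree (q + 1) q := by
  ext S
  rw [mem_pathVertexSets_completeBipartiteGraph, Set.mem_union, finsetsOfBidegree,
    finsetsOfBidegree, Set.mem_ofPred_eq, Set.mem_ofPred_eq]
  omega

end Bidegree

section SquarefreeMonomialIdeal

variable {V : Type*} (R : Type*) [CommSemiring R]

/-- The ideal generated by the squarefree monomials whose supports belong to `𝒮`. Path ideals and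
the products `I_c J_d` of squarefree Veronese ideals are instances. -/
noncomputable def squarefreeMonomialIdeal (𝒮 : Set (Finset V)) : Ideal (MvPolynomial V R) :=
  Ideal.span ((fun S => ∏ v ∈ S, X v) '' 𝒮)

theorem squarefreeMonomialIdeal_union (𝒮 𝒯 : Set (Finset V)) :
    squarefreeMonomialIdeal R (𝒮 ∪ 𝒯) =
      squarefreeMonomialIdeal R 𝒮 + squarefreeMonomialIdeal R 𝒯 := by
  rw [squarefreeMonomialIdeal, Set.image_union, Ideal.span_union, Submodule.add_eq_sup]
  rfl

theorem squarefreeMonomialIdeal_mul [DecidableEq V] {𝒮 𝒯 : Set (Finset V)}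
    (h : ∀ S ∈ 𝒮, ∀ T ∈ 𝒯, Disjoint S T) :
    squarefreeMonomialIdeal R 𝒮 * squarefreeMonomialIdeal R 𝒯 =
      squarefreeMonomialIdeal R (Set.image2 (· ∪ ·) 𝒮 𝒯) := by
  rw [squarefreeMonomialIdeal, squarefreeMonomialIdeal, squarefreeMonomialIdeal,
    Ideal.span_mul_span', ← Set.image2_mul, Set.image2_image_left, Set.image2_image_right,
    Set.image_image2]
  exact congrArg Ideal.span
    (Set.image2_congr fun S hS T hT => (Finset.prod_union (h S hS T hT)).symm)

theorem squarefreeMonomialIdeal_finsetsOfBidegree_mul {α β : Type*} (c d : ℕ) :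
    squarefreeMonomialIdeal R (finsetsOfBidegree c 0 : Set (Finset (α ⊕ β))) *
        squarefreeMonomialIdeal R (finsetsOfBidegree 0 d) =
      squarefreeMonomialIdeal R (finsetsOfBidegree c d) := by
  classical
  rw [squarefreeMonomialIdeal_mul R fun S hS T hT => disjoint_of_mem_finsetsOfBidegree hS hT,
    image2_union_finsetsOfBidegree]

end SquarefreeMonomialIdeal

theorem span_pathMonomials {V : Type*} [DecidableEq V] (K : Type*) [Field K]
    (G : SimpleGraph V) (t : ℕ) :
    Ideal.span (PathMonomials (K := K) G t) = squarefreeMonomialIdeal K (pathVertexSets G t) := by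
  refine congrArg Ideal.span (Set.ext fun f => ⟨?_, ?_⟩)
  · rintro ⟨l, hnodup, hlen, hchain, rfl⟩
    exact ⟨l.toFinset, ⟨l, hnodup, hlen, hchain, rfl⟩, List.prod_toFinset X hnodup⟩
  · rintro ⟨_, ⟨l, hnodup, hlen, hchain, rfl⟩, rfl⟩
    exact ⟨l, hnodup, hlen, hchain, List.prod_toFinset X hnodup⟩

theorem span_mixedMonomials (n m : ℕ) (K : Type*) [Field K] (c d : ℕ) :
    Ideal.span (MixedMonomials n m K c d) = squarefreeMonomialIdeal K (finsetsOfBidegree c d) := by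
  refine congrArg Ideal.span (Set.ext fun f => ⟨?_, ?_⟩)
  · rintro ⟨sx, sy, rfl, rfl, rfl⟩
    exact ⟨sx.disjSum sy, by simp [finsetsOfBidegree], Finset.prod_disjSum ..⟩
  · rintro ⟨S, ⟨hl, hr⟩, rfl⟩
    exact ⟨S.toLeft, S.toRight, hl, hr, Finset.prod_sum_eq_prod_toLeft_mul_prod_toRight ..⟩

theorem path_ideal_complete_bipartite_general (α β : Type*) [DecidableEq α] [DecidableEq β]
    (R : Type*) [CommSemiring R] (q : ℕ) :
    pathVertexSets (completeBipartiteGraph α β) (2 * q) = finsetsOfBidegree q q ∧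
    pathVertexSets (completeBipartiteGraph α β) (2 * q + 1) =
      finsetsOfBidegree q (q + 1) ∪ finsetsOfBidegree (q + 1) q ∧
    squarefreeMonomialIdeal R (pathVertexSets (completeBipartiteGraph α β) (2 * q)) =
      squarefreeMonomialIdeal R (finsetsOfBidegree q 0) *
        squarefreeMonomialIdeal R (finsetsOfBidegree 0 q) ∧
    squarefreeMonomialIdeal R (pathVertexSets (completeBipartiteGraph α β) (2 * q + 1)) =
      squarefreeMonomialIdeal R (finsetsOfBidegree q 0) *
        squarefreeMonomialIdeal R (finsetsOfBidegree 0 (q + 1)) +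
      squarefreeMonomialIdeal R (finsetsOfBidegree (q + 1) 0) *
        squarefreeMonomialIdeal R (finsetsOfBidegree 0 q) := by
  have even := pathVertexSets_completeBipartiteGraph_two_mul (α := α) (β := β) q
  have odd := pathVertexSets_completeBipartiteGraph_two_mul_add_one (α := α) (β := β) q
  refine ⟨even, odd, ?_, ?_⟩
  · rw [even, squarefreeMonomialIdeal_finsetsOfBidegree_mul]
  · rw [odd, squarefreeMonomialIdeal_union, squarefreeMonomialIdeal_finsetsOfBidegree_mul,
      squarefreeMonomialIdeal_finsetsOfBidegree_mul]

/-- In the complete bipartite graph on `Fin n ⊕ Fin m`: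
(1) for `q ≤ n`, `q ≤ m`, a finite vertex set is the vertex set of a path with `2q`
vertices iff it consists of exactly `q` left and `q` right vertices;
(2) a finite vertex set is the vertex set of a path with `2q+1` vertices iff its numbers
of left and right vertices are `(q, q+1)` or `(q+1, q)`.
Consequently, the path ideal `I_t(G)` equals `I_q J_q` when `t = 2q`, and
`I_q J_{q+1} + I_{q+1} J_q` when `t = 2q+1`. -/
theorem path_ideal_complete_bipartite (K : Type*) [Field K] (n m q : ℕ)
    (hn : 1 ≤ n) (hm : 1 ≤ m) (hq : 1 ≤ q) :
    ((q ≤ n ∧ q ≤ m) → ∀ S : Finset (Fin n ⊕ Fin m),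
      ((∃ l : List (Fin n ⊕ Fin m), l.Nodup ∧ l.length = 2 * q ∧
          l.Chain' (completeBipartiteGraph (Fin n) (Fin m)).Adj ∧ l.toFinset = S) ↔
        ((S.filter fun v => v.isLeft = true).card = q ∧
         (S.filter fun v => v.isRight = true).card = q))) ∧
    (∀ S : Finset (Fin n ⊕ Fin m),
      ((∃ l : List (Fin n ⊕ Fin m), l.Nodup ∧ l.length = 2 * q + 1 ∧
          l.Chain' (completeBipartiteGraph (Fin n) (Fin m)).Adj ∧ l.toFinset = S) ↔
        (((S.filter fun v => v.isLeft = true).card = q ∧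
          (S.filter fun v => v.isRight = true).card = q + 1) ∨
         ((S.filter fun v => v.isLeft = true).card = q + 1 ∧
          (S.filter fun v => v.isRight = true).card = q)))) ∧
    ((q ≤ n ∧ q ≤ m) →
      Ideal.span (PathMonomials (K := K) (completeBipartiteGraph (Fin n) (Fin m)) (2 * q)) =
        Ideal.span (MixedMonomials n m K q 0) * Ideal.span (MixedMonomials n m K 0 q)) ∧
    (Ideal.span (PathMonomials (K := K) (completeBipartiteGraph (Fin n) (Fin m)) (2 * q + 1)) =
        Ideal.span (MixedMonomials n m K q 0) * Ideal.span (MixedMonomials n m K 0 (q + 1)) +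
        Ideal.span (MixedMonomials n m K (q + 1) 0) * Ideal.span (MixedMonomials n m K 0 q)) := by
  obtain ⟨even, odd, evenIdeal, oddIdeal⟩ :=
    path_ideal_complete_bipartite_general (Fin n) (Fin m) K q
  simp only [card_filter_isLeft, card_filter_isRight, span_pathMonomials, span_mixedMonomials]
  exact ⟨fun _ => Set.ext_iff.1 even, Set.ext_iff.1 odd, fun _ => evenIdeal, oddIdeal⟩
end

section
/- Let K be a field, let m_1, m_2 ≥ 1 and let a, b ≥ 1 be integers. Let T = K[x_{11},…,x_{1m_1},x_{21},…,x_{2m_2}], and let M_1 = (x_{11},…,x_{1m_1}) and M_2 = (x_{21},…,x_{2m_2}) be the ideals generated by the variables of the two blocks. Then the ideal L = M_1^a · M_2^b is normal, i.e., L^k is integrally closed for every k ≥ 1. -/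
open MvPolynomial

/-- `f` is integral over the ideal `I`: there is an equation
`f^N + c_1 f^{N-1} + ⋯ + c_N = 0` with `c_i ∈ I^i`. -/
def IsIntegralOverIdeal {R : Type*} [CommRing R] (I : Ideal R) (f : R) : Prop :=
  ∃ N : ℕ, 0 < N ∧ ∃ c : ℕ → R,
    (∀ i ∈ Finset.Icc 1 N, c i ∈ I ^ i) ∧
    f ^ N + ∑ i ∈ Finset.Icc 1 N, c i * f ^ (N - i) = 0

/-- An ideal is integrally closed if it contains every element integral over it. -/
def IsIntegrallyClosedIdeal {R : Type*} [CommRing R] (I : Ideal R) : Prop :=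
  ∀ f, IsIntegralOverIdeal I f → f ∈ I

/-!
Substitute `X i * T ^ w i` for `X i`: the power of `T` dividing the image of `f` is the least
`w`-weight of a monomial of `f`. Over a reduced ring `(T ^ n)` is integrally closed, because `(T)`
is radical and `T` can be cancelled from an equation of integral dependence. Integral closedness
passes to preimages and intersections, so it suffices that a product of powers of block ideals is
cut out by lower bounds on the degrees in the individual blocks; disjointness of the blocks is what
makes a monomial satisfying these bounds factor accordingly.
-/

section IntegralClosure

variable {R S : Type*} [CommRing R] [CommRing S] {I J : Ideal R} {f q : R}

namespace IsIntegralOverIdeal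

theorem mono (hIJ : I ≤ J) (hf : IsIntegralOverIdeal I f) : IsIntegralOverIdeal J f := by
  obtain ⟨N, hN, c, hc, heq⟩ := hf
  exact ⟨N, hN, c, fun i hi => Ideal.pow_right_mono hIJ i (hc i hi), heq⟩

theorem map (φ : R →+* S) (hf : IsIntegralOverIdeal I f) :
    IsIntegralOverIdeal (I.map φ) (φ f) := by
  obtain ⟨N, hN, c, hc, heq⟩ := hf
  refine ⟨N, hN, fun i => φ (c i), fun i hi => ?_, by simpa using congrArg φ heq⟩
  rw [← Ideal.map_pow]
  exact Ideal.mem_map_of_mem φ (hc i hi)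

theorem mem_radical (hf : IsIntegralOverIdeal I f) : f ∈ I.radical := by
  obtain ⟨N, -, c, hc, heq⟩ := hf
  refine ⟨N, ?_⟩
  rw [eq_neg_of_add_eq_zero_left heq]
  refine I.neg_mem (I.sum_mem fun i hi => I.mul_mem_right _ ?_)
  exact Ideal.pow_le_self (Nat.one_le_iff_ne_zero.mp (Finset.mem_Icc.mp hi).1) (hc i hi)

theorem of_span_singleton_mul (hq : q ∈ nonZeroDivisors R)
    (hf : IsIntegralOverIdeal (Ideal.span {q} * I) (q * f)) : IsIntegralOverIdeal I f := by
  obtain ⟨N, hN, c, hc, heq⟩ := hf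
  simp only [mul_pow, Ideal.span_singleton_pow, Ideal.mem_span_singleton_mul] at hc
  choose! d hdI hdc using hc
  have hfactor : q ^ N * (f ^ N + ∑ i ∈ Finset.Icc 1 N, d i * f ^ (N - i)) = 0 := by
    rw [← heq, mul_add, mul_pow, Finset.mul_sum]
    congr 1
    refine Finset.sum_congr rfl fun i hi => ?_
    rw [← hdc i hi, mul_pow, ← pow_mul_pow_sub q (Finset.mem_Icc.mp hi).2]
    ring
  exact ⟨N, hN, d, hdI, (mul_left_mem_nonZeroDivisors_eq_zero_iff (pow_mem hq N)).mp hfactor⟩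

end IsIntegralOverIdeal

namespace IsIntegrallyClosedIdeal

theorem of_isRadical (hI : I.IsRadical) : IsIntegrallyClosedIdeal I :=
  fun _ hf => hI hf.mem_radical

theorem comap (φ : R →+* S) {J : Ideal S} (hJ : IsIntegrallyClosedIdeal J) :
    IsIntegrallyClosedIdeal (J.comap φ) :=
  fun _ hf => hJ _ ((hf.map φ).mono Ideal.map_comap_le)

theorem iInf {ι : Sort*} {I : ι → Ideal R} (hI : ∀ i, IsIntegrallyClosedIdeal (I i)) :
    IsIntegrallyClosedIdeal (⨅ i, I i) :=
  fun _ hf => Ideal.mem_iInf.mpr fun i => hI i _ (hf.mono (iInf_le I i))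

theorem span_singleton_mul (hq : q ∈ nonZeroDivisors R)
    (hqc : IsIntegrallyClosedIdeal (Ideal.span {q})) (hI : IsIntegrallyClosedIdeal I) :
    IsIntegrallyClosedIdeal (Ideal.span {q} * I) := by
  intro f hf
  obtain ⟨g, rfl⟩ := Ideal.mem_span_singleton.mp (hqc f (hf.mono Ideal.mul_le_left))
  exact Ideal.mul_mem_mul (Ideal.mem_span_singleton_self q) (hI g (hf.of_span_singleton_mul hq))

theorem span_singleton_pow (hq : q ∈ nonZeroDivisors R)
    (hqc : IsIntegrallyClosedIdeal (Ideal.span {q})) (n : ℕ) :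
    IsIntegrallyClosedIdeal (Ideal.span {q} ^ n) := by
  induction n with
  | zero => exact fun _ _ => by simp
  | succ n ih => exact pow_succ' (Ideal.span {q}) n ▸ span_singleton_mul hq hqc ih

end IsIntegrallyClosedIdeal

theorem isRadical_span_polynomial_X [IsReduced R] :
    (Ideal.span {(Polynomial.X : Polynomial R)}).IsRadical := by
  rw [← Polynomial.ker_constantCoeff]
  exact (RingHom.ker_isRadical_iff_reduced_of_surjective (f := Polynomial.constantCoeff (R := R))
    Polynomial.constantCoeff_surjective).mpr inferInstance

theorem isIntegrallyClosedIdeal_span_polynomial_X_pow [IsReduced R] (n : ℕ) :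
    IsIntegrallyClosedIdeal (Ideal.span {(Polynomial.X : Polynomial R)} ^ n) :=
  .span_singleton_pow Polynomial.monic_X.mem_nonZeroDivisors
    (.of_isRadical isRadical_span_polynomial_X) n

end IntegralClosure

section Weight

variable {σ R : Type*} [CommRing R]

/-- The `R`-algebra homomorphism `X i ↦ X i * T ^ w i` into polynomials in a new variable `T`,
which separates the homogeneous components for the grading in which `X i` has weight `w i`. -/
noncomputable def weightHom (w : σ → ℕ) :
    MvPolynomial σ R →ₐ[R] Polynomial (MvPolynomial σ R) :=
  aeval fun i => Polynomial.C (X i) * Polynomial.X ^ w i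

theorem weightHom_X (w : σ → ℕ) (i : σ) :
    weightHom w (X i : MvPolynomial σ R) = Polynomial.C (X i) * Polynomial.X ^ w i :=
  aeval_X _ i

theorem weightHom_monomial (w : σ → ℕ) (d : σ →₀ ℕ) (r : R) :
    weightHom w (monomial d r) =
      Polynomial.C (monomial d r) * Polynomial.X ^ Finsupp.weight w d := by
  simp only [weightHom, aeval_monomial, mul_pow, ← pow_mul, Finsupp.prod_mul]
  rw [monomial_eq, map_mul, mul_assoc, Finsupp.weight_apply, Finsupp.sum,
    ← Finset.prod_pow_eq_pow_sum]
  simp only [Finsupp.prod, map_prod, map_pow, smul_eq_mul, mul_comm (w _),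
    Polynomial.algebraMap_apply, algebraMap_eq]

theorem coeff_weightHom (w : σ → ℕ) (f : MvPolynomial σ R) (n : ℕ) :
    (weightHom w f).coeff n = weightedHomogeneousComponent w n f := by
  induction f using MvPolynomial.induction_on' with
  | monomial d r =>
    rw [weightHom_monomial, Polynomial.coeff_C_mul_X_pow,
      weightedHomogeneousComponent_of_mem (isWeightedHomogeneous_monomial w d r rfl)]
  | add f g hf hg => simp only [map_add, Polynomial.coeff_add, hf, hg]

/-- The `n`-th step of the filtration of `R[X i : i ∈ σ]` by `w`-weight: the ideal of polynomials
all of whose monomials have weight at least `n`, encoded as the preimage of `(T ^ n)` under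
`weightHom w`; see `mem_weightIdeal_iff`. -/
noncomputable def weightIdeal (R : Type*) [CommRing R] (w : σ → ℕ) (n : ℕ) :
    Ideal (MvPolynomial σ R) :=
  (Ideal.span {Polynomial.X} ^ n).comap (weightHom w)

theorem mem_weightIdeal_iff {w : σ → ℕ} {n : ℕ} {f : MvPolynomial σ R} :
    f ∈ weightIdeal R w n ↔ ∀ d ∈ f.support, n ≤ Finsupp.weight w d := by
  simp only [weightIdeal, Ideal.mem_comap, Ideal.span_singleton_pow, Ideal.mem_span_singleton,
    Polynomial.X_pow_dvd_iff, coeff_weightHom, MvPolynomial.ext_iff, coeff_zero,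
    coeff_weightedHomogeneousComponent, mem_support_iff]
  exact ⟨fun h d hd => not_lt.mp fun hlt => hd (by simpa using h _ hlt d),
    fun h k hk d => by grind⟩

theorem weightIdeal_one_pow_le (w : σ → ℕ) (n : ℕ) :
    weightIdeal R w 1 ^ n ≤ weightIdeal R w n := by
  simpa [weightIdeal] using
    Ideal.le_comap_pow (weightHom (R := R) w) (K := Ideal.span {Polynomial.X}) n

theorem isIntegrallyClosedIdeal_weightIdeal [IsReduced R] (w : σ → ℕ) (n : ℕ) :
    IsIntegrallyClosedIdeal (weightIdeal R w n) :=
  (isIntegrallyClosedIdeal_span_polynomial_X_pow n).comap (weightHom w).toRingHom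

end Weight

section Blocks

variable {σ ι R : Type*} [CommRing R] {s : ι → Set σ} {t : Finset ι}

theorem span_X_image_pow_le_weightIdeal (u : Set σ) (n : ℕ) :
    Ideal.span (X '' u) ^ n ≤ weightIdeal R (u.indicator 1) n := by
  refine (Ideal.pow_right_mono ?_ n).trans (weightIdeal_one_pow_le _ n)
  rw [Ideal.span_le, Set.image_subset_iff]
  intro j hj
  simp [weightIdeal, weightHom_X, hj, Ideal.mem_span_singleton]

theorem X_mem_prod_span_X_image_pow_indicator (hs : (t : Set ι).PairwiseDisjoint s) (j : σ) :
    (X j : MvPolynomial σ R) ∈ ∏ i ∈ t, Ideal.span (X '' s i) ^ (s i).indicator 1 j := by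
  by_cases hj : ∃ i ∈ t, j ∈ s i
  · obtain ⟨i, hi, hji⟩ := hj
    rw [Finset.prod_eq_single_of_mem i hi]
    · simpa [hji] using Ideal.subset_span (Set.mem_image_of_mem X hji)
    · intro l hl hli
      have hjl : j ∉ s l := Set.disjoint_right.mp (hs hl hi hli) hji
      simp [hjl]
  · push Not at hj
    rw [Finset.prod_eq_one fun i hi => by simp [hj i hi]]
    simp

theorem monomial_mem_prod_span_X_image_pow_weight (hs : (t : Set ι).PairwiseDisjoint s)
    (d : σ →₀ ℕ) (r : R) :
    monomial d r ∈
      ∏ i ∈ t, Ideal.span (X '' s i) ^ Finsupp.weight ((s i).indicator (1 : σ → ℕ)) d := by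
  simp only [Finsupp.weight_apply, Finsupp.sum, smul_eq_mul, mul_comm (d _),
    ← Finset.prod_pow_eq_pow_sum, pow_mul]
  rw [Finset.prod_comm, monomial_eq]
  refine Ideal.mul_mem_left _ _ (Ideal.prod_mem_prod fun j _ => ?_)
  rw [Finset.prod_pow]
  exact Ideal.pow_mem_pow (X_mem_prod_span_X_image_pow_indicator hs j) _

theorem prod_span_X_image_pow_eq_iInf_weightIdeal (hs : (t : Set ι).PairwiseDisjoint s)
    (n : ι → ℕ) :
    ∏ i ∈ t, Ideal.span (X '' s i) ^ n i =
      ⨅ i ∈ t, weightIdeal R ((s i).indicator 1) (n i) := by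
  apply le_antisymm
  · refine le_iInf₂ fun i hi => ?_
    exact (Ideal.prod_le_inf.trans (Finset.inf_le hi)).trans (span_X_image_pow_le_weightIdeal _ _)
  · intro f hf
    simp only [Ideal.mem_iInf, mem_weightIdeal_iff] at hf
    rw [f.as_sum]
    refine Ideal.sum_mem _ fun d hd => ?_
    exact Finset.prod_le_prod' (fun i hi => Ideal.pow_le_pow_right (hf i hi d hd))
      (monomial_mem_prod_span_X_image_pow_weight hs d _)

theorem product_of_powers_of_block_maximal_ideals_normal_general [IsReduced R]
    (hs : (t : Set ι).PairwiseDisjoint s) (n : ι → ℕ) (k : ℕ) :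
    IsIntegrallyClosedIdeal
      ((∏ i ∈ t, Ideal.span (X '' s i : Set (MvPolynomial σ R)) ^ n i) ^ k) := by
  simp only [← Finset.prod_pow, ← pow_mul]
  rw [prod_span_X_image_pow_eq_iInf_weightIdeal hs]
  exact .iInf fun i => .iInf fun _ => isIntegrallyClosedIdeal_weightIdeal _ _

end Blocks

/-- In `T = K[x_{11},…,x_{1m₁},x_{21},…,x_{2m₂}]`, with `M₁` and `M₂` the ideals
generated by the variables of the two blocks, the ideal `L = M₁^a M₂^b` is normal:
`L^k` is integrally closed for every `k ≥ 1`. -/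
theorem product_of_powers_of_block_maximal_ideals_normal (K : Type*) [Field K]
    (m₁ m₂ a b : ℕ) (hm₁ : 1 ≤ m₁) (hm₂ : 1 ≤ m₂) (ha : 1 ≤ a) (hb : 1 ≤ b)
    (M₁ M₂ : Ideal (MvPolynomial (Fin m₁ ⊕ Fin m₂) K))
    (hM₁ : M₁ = Ideal.span (Set.range fun j : Fin m₁ =>
        (X (Sum.inl j) : MvPolynomial (Fin m₁ ⊕ Fin m₂) K)))
    (hM₂ : M₂ = Ideal.span (Set.range fun j : Fin m₂ =>
        (X (Sum.inr j) : MvPolynomial (Fin m₁ ⊕ Fin m₂) K))) :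
    ∀ k : ℕ, 1 ≤ k → IsIntegrallyClosedIdeal ((M₁ ^ a * M₂ ^ b) ^ k) := by
  intro k _
  simpa [hM₁, hM₂, ← Set.range_comp, Function.comp_def] using
    product_of_powers_of_block_maximal_ideals_normal_general (R := K) (t := Finset.univ)
      ((pairwise_disjoint_on_bool.mpr Set.isCompl_range_inl_range_inr.disjoint).set_pairwise _)
      (fun i => cond i a b) k
end
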